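/- arXiv:1601.01452 — 3 statements merged into one kernel-verified Lean document; each statement's English description precedes it below -/
import Mathlib

section
/- Let (X_i)_{i≥1} be a sequence of real numbers. The series ∑_{i=1}^∞ X_i fails to converge if and only if for every nonnegative, nonincreasing sequence (c_j)_{j≥1} with c_j → 0 there exists a sequence (n_j)_{j≥1} of positive integers such that the recursive posterior mean E_k (formed from the block sums S_j determined by (n_j) and the indicators y_j = 1{|S_j| ≤ c_j}) tends to 0 as k → ∞. -/
open Filter

/-- Block sum `S_j = ∑_{i = N_{j-1}+1}^{N_j} X_i` where `N_j = n_1 + ⋯ + n_j`. -/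
noncomputable def blockSum (X : ℕ → ℝ) (n : ℕ → ℕ) (j : ℕ) : ℝ :=
  ∑ i ∈ Finset.Icc ((∑ l ∈ Finset.Icc 1 (j - 1), n l) + 1) (∑ l ∈ Finset.Icc 1 j, n l), X i

/-- Recursive Bayesian posterior mean at stage `k`:
`E_k = (∑_{j=1}^k j⁻² + ∑_{j=1}^k y_j) / (k + 2 ∑_{j=1}^k j⁻²)`. -/
noncomputable def postMean (y : ℕ → ℝ) (k : ℕ) : ℝ :=
  ((∑ j ∈ Finset.Icc 1 k, ((j : ℝ) ^ 2)⁻¹) + ∑ j ∈ Finset.Icc 1 k, y j) /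
    ((k : ℝ) + 2 * ∑ j ∈ Finset.Icc 1 k, ((j : ℝ) ^ 2)⁻¹)

/-!
A posterior mean `E_k` has the same limit as the Cesàro means of the `y_j`, because the prior
weights `j⁻²` average to `0`. If the partial sums `P N` do not converge, they are not Cauchy, so one
can choose `0 = N_0 < N_1 < ⋯` along which `P` jumps by at least a fixed `ε`; once `c_j < ε` every
`y_j` vanishes, and `E_k → 0` for all `c` simultaneously. If they do converge, let `c_j` be the
diameter of the tail `{P i | i ≥ j - 1}`: since `N_{j-1} ≥ j - 1` for every choice of positive block
lengths, always `y_j = 1` and `E_k → 1`.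
-/

theorem tendsto_sum_Icc_one_div {u : ℕ → ℝ} {L : ℝ} (hu : Tendsto u atTop (nhds L)) :
    Tendsto (fun k : ℕ => (∑ j ∈ Finset.Icc 1 k, u j) / k) atTop (nhds L) := by
  have hshift (k : ℕ) : ∑ j ∈ Finset.Icc 1 k, u j = ∑ i ∈ Finset.range k, u (i + 1) := by
    rw [Finset.range_eq_Ico, Finset.sum_Ico_add' u 0 k 1, zero_add,
      Finset.Ico_add_one_right_eq_Icc]
  simpa only [hshift, div_eq_inv_mul, Function.comp_apply] using
    (hu.comp (tendsto_add_atTop_nat 1)).cesaro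

theorem tendsto_postMean {y : ℕ → ℝ} {L : ℝ} (hy : Tendsto y atTop (nhds L)) :
    Tendsto (postMean y) atTop (nhds L) := by
  have hweight : Tendsto (fun j : ℕ => ((j : ℝ) ^ 2)⁻¹) atTop (nhds 0) :=
    (Real.summable_nat_pow_inv.2 one_lt_two).tendsto_atTop_zero
  have hprior := tendsto_sum_Icc_one_div hweight
  have hlim := (hprior.add (tendsto_sum_Icc_one_div hy)).div
    ((hprior.const_mul 2).const_add 1) (by norm_num)
  simp only [mul_zero, add_zero, zero_add, div_one] at hlim
  refine hlim.congr' ?_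
  filter_upwards [eventually_ne_atTop 0] with k hk
  have hk' : (k : ℝ) ≠ 0 := Nat.cast_ne_zero.2 hk
  simp only [postMean, Pi.div_apply]
  rw [← mul_div_mul_right _ _ hk']
  congr 1 <;> field_simp

section CauchySeq

variable {α : Type*} [PseudoMetricSpace α] {P : ℕ → α}

theorem exists_strictMono_le_dist_of_not_cauchySeq (hP : ¬ CauchySeq P) :
    ∃ ε > 0, ∃ φ : ℕ → ℕ, StrictMono φ ∧ φ 0 = 0 ∧ ∀ j, ε ≤ dist (P (φ (j + 1))) (P (φ j)) := by
  obtain ⟨ε, hε, hjump⟩ : ∃ ε > 0, ∀ M, ∃ m ≥ M, ε ≤ dist (P m) (P M) := by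
    simpa [Metric.cauchySeq_iff'] using hP
  choose next hnext hdist using hjump
  have lt_next (M : ℕ) : M < next M := by
    refine (hnext M).lt_of_ne fun h => ?_
    have hle : ε ≤ dist (P (next M)) (P M) := hdist M
    rw [← h, dist_self] at hle
    exact hle.not_gt hε
  have iterate_succ (j : ℕ) : next^[j + 1] 0 = next (next^[j] 0) :=
    Function.iterate_succ_apply' next j 0
  refine ⟨ε, hε, fun j => next^[j] 0, strictMono_nat_of_lt_succ fun j => ?_, rfl, fun j => ?_⟩
  · simpa only [iterate_succ] using lt_next (next^[j] 0)
  · simpa only [iterate_succ] using hdist (next^[j] 0)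

theorem exists_antitone_tendsto_zero_dist_le (hP : CauchySeq P) :
    ∃ b : ℕ → ℝ, (∀ N, 0 ≤ b N) ∧ Antitone b ∧ Tendsto b atTop (nhds 0) ∧
      ∀ N, ∀ l ≥ N, ∀ m ≥ N, dist (P l) (P m) ≤ b N := by
  have hbdd (N : ℕ) : Bornology.IsBounded (P '' Set.Ici N) :=
    (CauchySeq.isBounded_range hP).subset (Set.image_subset_range P _)
  refine ⟨fun N => Metric.diam (P '' Set.Ici N), fun _ => Metric.diam_nonneg,
    fun M N hMN => ?_, ?_, fun N l hl m hm => ?_⟩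
  · exact Metric.diam_mono (Set.image_mono (Set.Ici_subset_Ici.2 hMN)) (hbdd M)
  · obtain ⟨b, hb0, hdist, hb⟩ := cauchySeq_iff_le_tendsto_0.1 hP
    refine squeeze_zero (fun _ => Metric.diam_nonneg) (fun N => ?_) hb
    refine Metric.diam_le_of_forall_dist_le (hb0 N) ?_
    rintro _ ⟨l, hl, rfl⟩ _ ⟨m, hm, rfl⟩
    exact hdist l m N hl hm
  · exact Metric.dist_le_diam_of_mem (hbdd N) (Set.mem_image_of_mem P hl)
      (Set.mem_image_of_mem P hm)

end CauchySeq

/-- The end `N_j = n_1 + ⋯ + n_j` of the `j`-th block. Blocks are numbered from `1`, so `n 0` is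
never summed. -/
def blockEnd (n : ℕ → ℕ) (j : ℕ) : ℕ :=
  ∑ l ∈ Finset.Icc 1 j, n l

theorem blockEnd_mono (n : ℕ → ℕ) : Monotone (blockEnd n) := fun _ _ h =>
  Finset.sum_le_sum_of_subset (Finset.Icc_subset_Icc_right h)

theorem le_blockEnd {n : ℕ → ℕ} (hn : ∀ j, 0 < n j) (j : ℕ) : j ≤ blockEnd n j := by
  simpa [blockEnd] using Finset.card_nsmul_le_sum (Finset.Icc 1 j) n 1 fun l _ => hn l

theorem exists_blockEnd_eq {φ : ℕ → ℕ} (hφ : StrictMono φ) (h0 : φ 0 = 0) :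
    ∃ n : ℕ → ℕ, (∀ j, 0 < n j) ∧ blockEnd n = φ := by
  let n : ℕ → ℕ
    | 0 => 1
    | j + 1 => φ (j + 1) - φ j
  refine ⟨n, fun j => ?_, funext fun j => ?_⟩
  · cases j with
    | zero => exact one_pos
    | succ j => exact Nat.sub_pos_of_lt (hφ j.lt_succ_self)
  · induction j with
    | zero => simp [blockEnd, h0]
    | succ j ih =>
      rw [blockEnd, Finset.sum_Icc_succ_top (by simp), ← blockEnd, ih]
      exact Nat.add_sub_of_le (hφ j.lt_succ_self).le

section SmallBlocks

variable {E : Type*} [SeminormedAddCommGroup E] (X : ℕ → E)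

/-- The indicator `y_j = 1{‖S_j‖ ≤ c_j}`, where `S_j` is the sum of `X` over the `j`-th block. -/
noncomputable def smallBlockIndicator (n : ℕ → ℕ) (c : ℕ → ℝ) (j : ℕ) : ℝ :=
  if ‖∑ i ∈ Finset.Icc (blockEnd n (j - 1) + 1) (blockEnd n j), X i‖ ≤ c j then 1 else 0

theorem norm_sum_Icc_add_one_eq_dist {a b : ℕ} (hab : a ≤ b) :
    ‖∑ i ∈ Finset.Icc (a + 1) b, X i‖ =
      dist (∑ i ∈ Finset.Icc 1 b, X i) (∑ i ∈ Finset.Icc 1 a, X i) := by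
  have hIoc (m : ℕ) : Finset.Icc 1 m = Finset.Ioc 0 m := Finset.Icc_add_one_left_eq_Ioc 0 m
  rw [dist_eq_norm, Finset.Icc_add_one_left_eq_Ioc, hIoc, hIoc,
    ← Finset.sum_Ioc_consecutive X a.zero_le hab, add_sub_cancel_left]

theorem smallBlockIndicator_eq_ite_dist (n : ℕ → ℕ) (c : ℕ → ℝ) (j : ℕ) :
    smallBlockIndicator X n c j =
      if dist (∑ i ∈ Finset.Icc 1 (blockEnd n j), X i)
        (∑ i ∈ Finset.Icc 1 (blockEnd n (j - 1)), X i) ≤ c j then 1 else 0 := by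
  rw [smallBlockIndicator, norm_sum_Icc_add_one_eq_dist X (blockEnd_mono n (j.sub_le 1))]

theorem exists_forall_tendsto_smallBlockIndicator_zero
    (hX : ¬ CauchySeq fun N => ∑ i ∈ Finset.Icc 1 N, X i) :
    ∃ n : ℕ → ℕ, (∀ j, 0 < n j) ∧ ∀ c : ℕ → ℝ, Tendsto c atTop (nhds 0) →
      Tendsto (smallBlockIndicator X n c) atTop (nhds 0) := by
  obtain ⟨ε, hε, φ, hφ, hφ0, hjump⟩ := exists_strictMono_le_dist_of_not_cauchySeq hX
  obtain ⟨n, hn, rfl⟩ := exists_blockEnd_eq hφ hφ0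
  refine ⟨n, hn, fun c hc => tendsto_nhds_of_eventually_eq ?_⟩
  filter_upwards [hc.eventually_lt_const hε, eventually_ge_atTop 1] with j hcj hj
  have hdist := hjump (j - 1)
  rw [Nat.sub_add_cancel hj] at hdist
  rw [smallBlockIndicator_eq_ite_dist, if_neg (hcj.trans_le hdist).not_ge]

theorem exists_antitone_forall_tendsto_smallBlockIndicator_one
    (hX : CauchySeq fun N => ∑ i ∈ Finset.Icc 1 N, X i) :
    ∃ c : ℕ → ℝ, (∀ j, 0 ≤ c j) ∧ Antitone c ∧ Tendsto c atTop (nhds 0) ∧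
      ∀ n : ℕ → ℕ, (∀ j, 0 < n j) → Tendsto (smallBlockIndicator X n c) atTop (nhds 1) := by
  obtain ⟨b, hb0, hb_anti, hb, hdist⟩ := exists_antitone_tendsto_zero_dist_le hX
  refine ⟨fun j => b (j - 1), fun j => hb0 _, fun i j hij => hb_anti (Nat.sub_le_sub_right hij 1),
    hb.comp (tendsto_sub_atTop_nat 1), fun n hn => ?_⟩
  refine tendsto_nhds_of_eventually_eq (Eventually.of_forall fun j => ?_)
  have hprev : j - 1 ≤ blockEnd n (j - 1) := le_blockEnd hn _
  rw [smallBlockIndicator_eq_ite_dist,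
    if_pos (hdist _ _ (hprev.trans (blockEnd_mono n (j.sub_le 1))) _ hprev)]

theorem not_convergence_iff_posterior_mean_tendsto_zero_general [CompleteSpace E] :
    [¬ ∃ l : E, Tendsto (fun N : ℕ => ∑ i ∈ Finset.Icc 1 N, X i) atTop (nhds l),
      ∃ n : ℕ → ℕ, (∀ j, 0 < n j) ∧ ∀ c : ℕ → ℝ, Tendsto c atTop (nhds 0) →
        Tendsto (postMean (smallBlockIndicator X n c)) atTop (nhds 0),
      ∀ c : ℕ → ℝ, (∀ j, 0 ≤ c j) → Antitone c → Tendsto c atTop (nhds 0) →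
        ∃ n : ℕ → ℕ, (∀ j, 0 < n j) ∧
          Tendsto (postMean (smallBlockIndicator X n c)) atTop (nhds 0)].TFAE := by
  tfae_have 1 → 2 := fun hX => by
    obtain ⟨n, hn, hy⟩ := exists_forall_tendsto_smallBlockIndicator_zero X
      fun hcauchy => hX (cauchySeq_tendsto_of_complete hcauchy)
    exact ⟨n, hn, fun c hc => tendsto_postMean (hy c hc)⟩
  tfae_have 2 → 3 := fun ⟨n, hn, hE⟩ c _ _ hc => ⟨n, hn, hE c hc⟩
  tfae_have 3 → 1 := by
    rintro hE ⟨l, hl⟩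
    obtain ⟨c, hc0, hc_anti, hc, hy⟩ :=
      exists_antitone_forall_tendsto_smallBlockIndicator_one X hl.cauchySeq
    obtain ⟨n, hn, hzero⟩ := hE c hc0 hc_anti hc
    exact zero_ne_one (tendsto_nhds_unique hzero (tendsto_postMean (hy n hn)))
  tfae_finish

end SmallBlocks

/-- `∑ Xᵢ` fails to converge iff for every nonnegative
nonincreasing sequence `c_j → 0` there is a sequence of positive block lengths
for which the recursive posterior mean tends to `0`. -/
theorem not_convergence_iff_posterior_mean_tendsto_zero (X : ℕ → ℝ) :
    (¬ ∃ l : ℝ, Tendsto (fun N : ℕ => ∑ i ∈ Finset.Icc 1 N, X i) atTop (nhds l)) ↔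
    (∀ c : ℕ → ℝ, (∀ j, 0 ≤ c j) → Antitone c → Tendsto c atTop (nhds 0) →
      ∃ n : ℕ → ℕ, (∀ j, 0 < n j) ∧
        Tendsto (postMean (fun j => if |blockSum X n j| ≤ c j then (1 : ℝ) else 0))
          atTop (nhds 0)) :=
  (not_convergence_iff_posterior_mean_tendsto_zero_general X).out 0 2
end

section
/- For a real parameter a > 0, consider the series S = ∑_{i=3}^∞ (1 − (log i/i)·a^{(log log i)/(log i)})^i, where a^{(log log i)/(log i)} is the real power. Then S converges if a > e and diverges if 0 < a ≤ e. -/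
open Filter

/-!
With `L = log i` and `c = log a`, the `i`-th term is `(1 - x) ^ i` for
`x = (L / i) * exp (c * log L / L)`. Since `i * x ^ 2 → 0`, it is asymptotically equivalent to
`exp (-(i * x))`, and `i * x = L + c * log L + o(1)`. Hence the term is equivalent to
`1 / (i * (log i) ^ c)`, the term of a Bertrand series, which converges exactly when `c > 1`.
-/

open Asymptotics Topology

section PartialSums

lemma exists_tendsto_sum_Icc_iff_exists_tendsto_sum_range {G : Type*} [AddCommGroup G]
    [TopologicalSpace G] [ContinuousAdd G] (f : ℕ → G) (m : ℕ) :
    (∃ l, Tendsto (fun N => ∑ i ∈ Finset.Icc m N, f i) atTop (𝓝 l)) ↔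
      ∃ l, Tendsto (fun N => ∑ i ∈ Finset.range N, f i) atTop (𝓝 l) := by
  have sum_range_succ_eq : ∀ᶠ N in atTop, ∑ i ∈ Finset.range (N + 1), f i =
      ∑ i ∈ Finset.Icc m N, f i + ∑ i ∈ Finset.range m, f i := by
    filter_upwards [eventually_ge_atTop m] with N hN
    rw [← Finset.Ico_add_one_right_eq_Icc, add_comm (Finset.sum _ _),
      Finset.sum_range_add_sum_Ico f (Nat.le_add_right_of_le hN)]
  constructor
  · rintro ⟨l, hl⟩
    exact ⟨_, (tendsto_add_atTop_iff_nat 1).1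
      ((hl.add_const _).congr' (sum_range_succ_eq.mono fun _ h => h.symm))⟩
  · rintro ⟨l, hl⟩
    refine ⟨_, (((tendsto_add_atTop_iff_nat 1).2 hl).add_const (-∑ i ∈ Finset.range m, f i)).congr'
      (sum_range_succ_eq.mono fun N h => ?_)⟩
    rw [h, add_neg_cancel_right]

lemma exists_tendsto_sum_range_iff_summable {f : ℕ → ℝ} (hf : ∀ᶠ i in atTop, 0 ≤ f i) :
    (∃ l, Tendsto (fun N => ∑ i ∈ Finset.range N, f i) atTop (𝓝 l)) ↔ Summable f := by
  refine ⟨fun ⟨l, hl⟩ => ?_, fun h => ⟨_, h.hasSum.tendsto_sum_nat⟩⟩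
  obtain ⟨K, hK⟩ := eventually_atTop.1 hf
  have tail_tendsto : Tendsto (fun N => ∑ i ∈ Finset.range N, f (i + K)) atTop
      (𝓝 (l - ∑ i ∈ Finset.range K, f i)) := by
    refine (((tendsto_add_atTop_iff_nat K).2 hl).sub_const _).congr fun N => ?_
    simp only [add_comm _ K, Finset.sum_range_add, add_sub_cancel_left]
  have tail_nonneg (i : ℕ) : 0 ≤ f (i + K) := hK _ (Nat.le_add_left K i)
  exact (summable_nat_add_iff K).1
    ((hasSum_iff_tendsto_nat_of_nonneg tail_nonneg _).2 tail_tendsto).summable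

end PartialSums

section BertrandSeries

lemma tendsto_log_natCast_atTop : Tendsto (fun n : ℕ => Real.log n) atTop atTop :=
  Real.tendsto_log_atTop.comp tendsto_natCast_atTop_atTop

lemma summable_inv_nat_mul_log_rpow_iff_of_nonneg {c : ℝ} (hc : 0 ≤ c) :
    Summable (fun n : ℕ => ((n : ℝ) * Real.log n ^ c)⁻¹) ↔ 1 < c := by
  have eventually_antitone : ∀ᶠ n : ℕ in atTop,
      (((n + 1 : ℕ) : ℝ) * Real.log (n + 1 : ℕ) ^ c)⁻¹ ≤ ((n : ℝ) * Real.log n ^ c)⁻¹ := by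
    filter_upwards [eventually_gt_atTop 1] with n hn
    have log_pos : 0 < Real.log n := Real.log_pos (by exact_mod_cast hn)
    gcongr <;> lia
  have condensed (k : ℕ) : (2 : ℝ) ^ k * (((2 ^ k : ℕ) : ℝ) * Real.log (2 ^ k : ℕ) ^ c)⁻¹ =
      ((k : ℝ) ^ c)⁻¹ * (Real.log 2 ^ c)⁻¹ := by
    rw [Nat.cast_pow, Nat.cast_ofNat, Real.log_pow,
      Real.mul_rpow k.cast_nonneg (Real.log_nonneg one_le_two), mul_inv, mul_inv,
      mul_inv_cancel_left₀ (by positivity)]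
  have log_two_rpow_ne_zero : (Real.log 2 ^ c)⁻¹ ≠ 0 :=
    inv_ne_zero (Real.rpow_pos_of_pos (Real.log_pos one_lt_two) c).ne'
  rw [← summable_condensed_iff_of_eventually_nonneg (.of_forall fun n => by positivity)
    eventually_antitone]
  simp_rw [condensed]
  rw [summable_mul_right_iff log_two_rpow_ne_zero, Real.summable_nat_rpow_inv]

lemma summable_inv_nat_mul_log_rpow_iff {c : ℝ} :
    Summable (fun n : ℕ => ((n : ℝ) * Real.log n ^ c)⁻¹) ↔ 1 < c := by
  rcases le_or_gt 0 c with hc | hc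
  · exact summable_inv_nat_mul_log_rpow_iff_of_nonneg hc
  refine iff_of_false (fun h => Real.not_summable_natCast_inv ?_) (hc.trans one_pos).not_gt
  refine h.of_norm_bounded_eventually_nat ?_
  filter_upwards [tendsto_log_natCast_atTop.eventually_ge_atTop 1, eventually_gt_atTop 0]
    with n hlog hn
  rw [norm_inv, Real.norm_natCast]
  gcongr
  exact mul_le_of_le_one_right n.cast_nonneg (Real.rpow_le_one_of_one_le_of_nonpos hlog hc.le)

end BertrandSeries

section AsymptoticEquivalence

lemma log_one_add_sub_self_isBigO : (fun x : ℝ => Real.log (1 + x) - x) =O[𝓝 0] (· ^ 2) := by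
  have h := Complex.log_sub_self_isBigO.comp_tendsto (Complex.continuous_ofReal.tendsto' 0 0 rfl)
  rw [← Complex.isBigO_ofReal_left, ← Complex.isBigO_ofReal_right]
  refine h.congr' ?_ (.of_forall fun x => by simp)
  filter_upwards [eventually_gt_nhds (show (-1 : ℝ) < 0 by simp)] with x hx
  have one_add_nonneg : 0 ≤ 1 + x := by linarith
  simp [Complex.ofReal_log one_add_nonneg]

lemma exp_sub_one_sub_self_isBigO : (fun x : ℝ => Real.exp x - 1 - x) =O[𝓝 0] (· ^ 2) := by
  simpa [Finset.sum_range_succ, sub_sub] using Real.exp_sub_sum_range_isBigO_pow 2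

variable {α : Type*} {l : Filter α}

lemma tendsto_zero_of_tendsto_mul_sq {r u : α → ℝ} (hr : Tendsto r l atTop)
    (hru : Tendsto (fun t => r t * u t ^ 2) l (𝓝 0)) : Tendsto u l (𝓝 0) := by
  have sq_tendsto : Tendsto (fun t => u t ^ 2) l (𝓝 0) := by
    refine (hru.div_atTop hr).congr' ?_
    filter_upwards [hr.eventually_ne_atTop 0] with t ht
    exact mul_div_cancel_left₀ _ ht
  rw [tendsto_zero_iff_abs_tendsto_zero]
  simpa [Real.sqrt_sq_eq_abs] using! sq_tendsto.sqrt

lemma tendsto_mul_comp_of_isBigO_sq {g : ℝ → ℝ} {r u : α → ℝ} (hg : g =O[𝓝 0] (· ^ 2))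
    (hr : Tendsto r l atTop) (hru : Tendsto (fun t => r t * u t ^ 2) l (𝓝 0)) :
    Tendsto (fun t => r t * g (u t)) l (𝓝 0) :=
  ((isBigO_refl r l).mul
    (hg.comp_tendsto (tendsto_zero_of_tendsto_mul_sq hr hru))).trans_tendsto hru

lemma isEquivalent_exp_of_tendsto_sub {f g : α → ℝ} (h : Tendsto (fun t => f t - g t) l (𝓝 0)) :
    (fun t => Real.exp (f t)) ~[l] fun t => Real.exp (g t) := by
  refine isEquivalent_of_tendsto_one ?_
  have exp_sub_tendsto := (Real.continuous_exp.tendsto' 0 1 Real.exp_zero).comp h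
  exact exp_sub_tendsto.congr fun t => Real.exp_sub (f t) (g t)

lemma isEquivalent_one_add_pow_exp {u : ℕ → ℝ} (hu : Tendsto (fun n => n * u n ^ 2) atTop (𝓝 0)) :
    (fun n => (1 + u n) ^ n) ~[atTop] fun n => Real.exp (n * u n) := by
  have u_tendsto : Tendsto u atTop (𝓝 0) :=
    tendsto_zero_of_tendsto_mul_sq tendsto_natCast_atTop_atTop hu
  have exponent_sub_tendsto :
      Tendsto (fun n : ℕ => n * Real.log (1 + u n) - n * u n) atTop (𝓝 0) := by
    simpa only [mul_sub] using
      tendsto_mul_comp_of_isBigO_sq log_one_add_sub_self_isBigO tendsto_natCast_atTop_atTop hu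
  refine (isEquivalent_exp_of_tendsto_sub exponent_sub_tendsto).congr_left ?_
  filter_upwards [u_tendsto.eventually_const_lt (show (-1 : ℝ) < 0 by simp)] with n hn
  rw [Real.exp_nat_mul, Real.exp_log (by linarith)]

end AsymptoticEquivalence

lemma tendsto_log_sq_div_self_atTop : Tendsto (fun t => Real.log t ^ 2 / t) atTop (𝓝 0) :=
  Real.isLittleO_pow_log_id_atTop.tendsto_div_nhds_zero

lemma tendsto_mul_rpow_log_div_sub {a : ℝ} (ha : 0 < a) :
    Tendsto (fun t => t * a ^ (Real.log t / t) - (t + Real.log a * Real.log t)) atTop (𝓝 0) := by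
  have mul_sq_tendsto : Tendsto (fun t => t * (Real.log a * (Real.log t / t)) ^ 2) atTop (𝓝 0) := by
    have h := tendsto_log_sq_div_self_atTop.const_mul (Real.log a ^ 2)
    rw [mul_zero] at h
    refine h.congr fun t => ?_
    field_simp
  refine (tendsto_mul_comp_of_isBigO_sq exp_sub_one_sub_self_isBigO tendsto_id
    mul_sq_tendsto).congr' ?_
  filter_upwards [eventually_ne_atTop 0] with t ht
  rw [Real.rpow_def_of_pos ha, id]
  field_simp
  ring

lemma tendsto_nat_mul_sq_log_div_mul_rpow {a : ℝ} (ha : a ≠ 0) :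
    Tendsto (fun i : ℕ =>
      i * ((Real.log i / i) * a ^ (Real.log (Real.log i) / Real.log i)) ^ 2) atTop (𝓝 0) := by
  have log_sq_div_tendsto := tendsto_log_sq_div_self_atTop.comp tendsto_natCast_atTop_atTop
  have rpow_tendsto := (Real.continuous_const_rpow ha).continuousAt.tendsto.comp
    (Real.isLittleO_log_id_atTop.tendsto_div_nhds_zero.comp tendsto_log_natCast_atTop)
  have h := log_sq_div_tendsto.mul (rpow_tendsto.pow 2)
  rw [zero_mul] at h
  refine h.congr fun i => ?_
  simp only [Function.comp_apply, id]
  field_simp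

lemma one_sub_log_div_mul_rpow_pow_isEquivalent {a : ℝ} (ha : 0 < a) :
    (fun i : ℕ => (1 - (Real.log i / i) * a ^ (Real.log (Real.log i) / Real.log i)) ^ i) ~[atTop]
      fun i : ℕ => ((i : ℝ) * Real.log i ^ Real.log a)⁻¹ := by
  set x : ℕ → ℝ := fun i => (Real.log i / i) * a ^ (Real.log (Real.log i) / Real.log i) with hx
  have pow_equiv : (fun i => (1 - x i) ^ i) ~[atTop] fun i => Real.exp (-(i * x i)) := by
    simpa only [← sub_eq_add_neg, mul_neg] using isEquivalent_one_add_pow_exp (u := fun i => -x i)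
      (by simpa only [neg_sq] using tendsto_nat_mul_sq_log_div_mul_rpow ha.ne')
  have exponent_tendsto : Tendsto (fun i : ℕ => -(i * x i) -
      -(Real.log i + Real.log a * Real.log (Real.log i))) atTop (𝓝 0) := by
    have h := ((tendsto_mul_rpow_log_div_sub ha).comp tendsto_log_natCast_atTop).neg
    rw [neg_zero] at h
    refine h.congr' ?_
    filter_upwards [eventually_ne_atTop 0] with i hi
    simp only [Function.comp_apply, hx]
    field_simp
    ring
  refine (pow_equiv.trans (isEquivalent_exp_of_tendsto_sub exponent_tendsto)).congr_right ?_
  filter_upwards [eventually_gt_atTop 0, tendsto_log_natCast_atTop.eventually_gt_atTop 0]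
    with i hi hlog
  rw [Real.exp_neg, Real.exp_add, Real.exp_log (by exact_mod_cast hi), mul_comm (Real.log a),
    Real.rpow_def_of_pos hlog]

/-- for `a > 0`, the series
`S = ∑_{i=3}^∞ (1 - (log i / i) · a^{(log log i)/(log i)})^i`
converges if `a > e` and diverges if `0 < a ≤ e`. -/
theorem example3_series_convergence (a : ℝ) (ha : 0 < a) :
    (Real.exp 1 < a → ∃ l : ℝ,
      Tendsto (fun N : ℕ => ∑ i ∈ Finset.Icc 3 N,
        (1 - (Real.log i / i) * a ^ (Real.log (Real.log i) / Real.log i)) ^ i)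
        atTop (nhds l)) ∧
    (a ≤ Real.exp 1 → ¬ ∃ l : ℝ,
      Tendsto (fun N : ℕ => ∑ i ∈ Finset.Icc 3 N,
        (1 - (Real.log i / i) * a ^ (Real.log (Real.log i) / Real.log i)) ^ i)
        atTop (nhds l)) := by
  have equiv := one_sub_log_div_mul_rpow_pow_isEquivalent ha
  have eventually_nonneg := equiv.eventually_nonneg (.of_forall fun i => by positivity)
  rw [exists_tendsto_sum_Icc_iff_exists_tendsto_sum_range,
    exists_tendsto_sum_range_iff_summable eventually_nonneg, equiv.summable_iff_nat,
    summable_inv_nat_mul_log_rpow_iff, Real.lt_log_iff_exp_lt ha]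
  exact ⟨id, not_lt_of_ge⟩
end

section
/- For real parameters a ≥ 0 and b ≥ 0, consider the series S^{a,b} = ∑_{i=3}^∞ (1 − log i/i − (log log i/i)·cos²(1/i)·(a + (−1)^i b))^i. Then S^{a,b} converges if a − b > 1 and diverges if a + b < 1. -/
open Filter

/-!
If `x n ^ 2 = o(n)`, then `(1 - x n / n) ^ n ~ exp (-x n)`. With
`x n = log n + log (log n) * s n` and `s` bounded, this turns the `n`-th term of the series into
`1 / (n * (log n) ^ s n)`, the term of a Bertrand series with variable exponent
`s n = cos² (1 / n) * (a + (-1) ^ n * b)`. If `a - |b| > 1`, then `s n` is eventually bounded below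
by some `p > 1`. If `a - |b| ≤ 1`, then `s n ≤ 1` on one of the two parity classes, and
`∑ 1 / (n * log n)` already diverges along any residue class because its terms decrease.
-/

section

open Real Asymptotics Topology

theorem exists_tendsto_sum_Icc_iff_summable {f : ℕ → ℝ} (hf : ∀ᶠ n in atTop, 0 ≤ f n) (m : ℕ) :
    (∃ l, Tendsto (fun N ↦ ∑ i ∈ Finset.Icc m N, f i) atTop (𝓝 l)) ↔ Summable f := by
  obtain ⟨M, hmM, hM⟩ : ∃ M ≥ m, ∀ n ≥ M, 0 ≤ f n :=
    ((eventually_ge_atTop m).and (eventually_forall_ge_atTop.2 hf)).exists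
  have hsplit (n : ℕ) : ∑ i ∈ Finset.Ico m (n + M), f i =
      ∑ i ∈ Finset.Ico m M, f i + ∑ i ∈ Finset.range n, f (i + M) := by
    rw [← Finset.sum_Ico_consecutive f hmM (Nat.le_add_left M n), Finset.sum_Ico_eq_sum_range f M,
      Nat.add_sub_cancel]
    simp only [add_comm M]
  simp only [← Finset.Ico_add_one_right_eq_Icc]
  rw [← summable_nat_add_iff M]
  constructor
  · rintro ⟨l, hl⟩
    have hIco : Tendsto (fun N ↦ ∑ i ∈ Finset.Ico m N, f i) atTop (𝓝 l) :=
      (tendsto_add_atTop_iff_nat 1).1 hl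
    refine ⟨l - ∑ i ∈ Finset.Ico m M, f i,
      (hasSum_iff_tendsto_nat_of_nonneg (fun i ↦ hM _ (Nat.le_add_left M i)) _).2 ?_⟩
    refine (((tendsto_add_atTop_iff_nat M).2 hIco).sub_const _).congr fun n ↦ ?_
    rw [hsplit, add_sub_cancel_left]
  · intro hsum
    have hIco := hsum.hasSum.tendsto_sum_nat.const_add (∑ i ∈ Finset.Ico m M, f i)
    simp only [← hsplit] at hIco
    rw [tendsto_add_atTop_iff_nat (f := fun N ↦ ∑ i ∈ Finset.Ico m N, f i)] at hIco
    exact ⟨_, (tendsto_add_atTop_iff_nat 1).2 hIco⟩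

theorem summable_indicator_mod_iff_of_antitoneOn {m N : ℕ} [NeZero m] {f : ℕ → ℝ}
    (hf : AntitoneOn f (Set.Ici N)) (k : ZMod m) :
    Summable ({n : ℕ | (n : ZMod m) = k}.indicator f) ↔ Summable f := by
  let g : ℕ → ℝ := fun n ↦ f (max N n)
  have hg : Antitone g := fun i j hij ↦
    hf (le_max_left N i) (le_max_left N j) (max_le_max_left N hij)
  have hfg : f =ᶠ[atTop] g := by
    filter_upwards [eventually_ge_atTop N] with n hn
    simp only [g, max_eq_right hn]
  have hfg_indicator : {n : ℕ | (n : ZMod m) = k}.indicator f =ᶠ[atTop]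
      {n : ℕ | (n : ZMod m) = k}.indicator g :=
    hfg.mono fun n hn ↦ by simp only [Set.indicator_apply, hn]
  rw [summable_congr_atTop hfg_indicator, summable_congr_atTop hfg, summable_indicator_mod_iff hg]

theorem abs_one_sub_mul_exp_sub_one_le {y : ℝ} (hy : |y| ≤ 1) :
    |(1 - y) * exp y - 1| ≤ 3 * y ^ 2 := by
  have hexp : |exp y - 1 - y| ≤ y ^ 2 := abs_exp_sub_one_sub_id_le hy
  have hone_sub : |1 - y| ≤ 2 := by
    linarith [abs_sub 1 y, abs_one (α := ℝ)]
  calc |(1 - y) * exp y - 1| = |(1 - y) * (exp y - 1 - y) - y ^ 2| := by ring_nf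
    _ ≤ |(1 - y) * (exp y - 1 - y)| + |y ^ 2| := abs_sub _ _
    _ = |1 - y| * |exp y - 1 - y| + y ^ 2 := by rw [abs_mul, abs_of_nonneg (sq_nonneg y)]
    _ ≤ 2 * y ^ 2 + y ^ 2 := by gcongr
    _ = 3 * y ^ 2 := by ring

theorem isEquivalent_one_sub_div_pow_exp_neg {x : ℕ → ℝ}
    (hx : (fun n ↦ x n ^ 2) =o[atTop] fun n ↦ (n : ℝ)) :
    (fun n ↦ (1 - x n / n) ^ n) ~[atTop] fun n ↦ exp (-x n) := by
  have hlim : Tendsto (fun n : ℕ ↦ x n ^ 2 / n) atTop (𝓝 0) := hx.tendsto_div_nhds_zero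
  have herror : Tendsto (fun n : ℕ ↦ n * ((1 - x n / n) * exp (x n / n) - 1)) atTop (𝓝 0) := by
    refine squeeze_zero_norm' ?_ (by simpa only [mul_zero] using hlim.const_mul 3)
    filter_upwards [hlim.eventually_le_const one_pos, eventually_ge_atTop 1] with n hle hn
    have hn' : (1 : ℝ) ≤ n := mod_cast hn
    have hsq : n * (x n / n) ^ 2 = x n ^ 2 / n := by field_simp
    have habs : |x n / n| ≤ 1 := by
      rw [← sq_le_one_iff_abs_le_one]
      exact (le_mul_of_one_le_left (sq_nonneg _) hn').trans (hsq.trans_le hle)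
    calc ‖n * ((1 - x n / n) * exp (x n / n) - 1)‖
        = n * |(1 - x n / n) * exp (x n / n) - 1| := by
          rw [norm_mul, norm_natCast, norm_eq_abs]
      _ ≤ n * (3 * (x n / n) ^ 2) := by gcongr; exact abs_one_sub_mul_exp_sub_one_le habs
      _ = 3 * (x n ^ 2 / n) := by rw [← hsq]; ring
  refine isEquivalent_of_tendsto_one ?_
  -- With `y = x n / n`, the quotient of the two sides is `((1 - y) * exp y) ^ n`.
  have hpow := tendsto_one_add_pow_exp_of_tendsto herror
  rw [exp_zero] at hpow
  refine hpow.congr' ?_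
  filter_upwards [eventually_ne_atTop 0] with n hn
  have hn' : (n : ℝ) ≠ 0 := mod_cast hn
  rw [Pi.div_apply, add_sub_cancel, mul_pow, ← exp_nat_mul, mul_div_cancel₀ _ hn', exp_neg,
    div_inv_eq_mul]

/-- The term `1 / (x * (log x) ^ p)` of the Bertrand series with exponent `p`. The exponent comes
first so that it may vary with the index, as in `fun n ↦ bertrandTerm (s n) n`. -/
noncomputable def bertrandTerm (p x : ℝ) : ℝ := (x * log x ^ p)⁻¹

theorem bertrandTerm_nonneg (p : ℝ) {x : ℝ} (hx : 1 ≤ x) : 0 ≤ bertrandTerm p x := by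
  have := log_nonneg hx
  unfold bertrandTerm
  positivity

theorem bertrandTerm_eq_exp (p : ℝ) {x : ℝ} (hx : 1 < x) :
    bertrandTerm p x = exp (-(log x + log (log x) * p)) := by
  rw [bertrandTerm, rpow_def_of_pos (log_pos hx), exp_neg, exp_add, exp_log (one_pos.trans hx)]

theorem bertrandTerm_le_of_exponent_le {p q x : ℝ} (hx : exp 1 ≤ x) (hpq : p ≤ q) :
    bertrandTerm q x ≤ bertrandTerm p x := by
  have hx0 : 0 < x := (exp_pos 1).trans_le hx
  have hlog : 1 ≤ log x := (le_log_iff_exp_le hx0).2 hx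
  unfold bertrandTerm
  gcongr

theorem antitoneOn_bertrandTerm {p : ℝ} (hp : 0 ≤ p) :
    AntitoneOn (bertrandTerm p) (Set.Ioi 1) := by
  intro x (hx : 1 < x) y (hy : 1 < y) hxy
  have := log_pos hx
  unfold bertrandTerm
  gcongr

theorem antitoneOn_bertrandTerm_natCast {p : ℝ} (hp : 0 ≤ p) :
    AntitoneOn (fun n : ℕ ↦ bertrandTerm p n) (Set.Ici 2) :=
  fun _ hm _ hn hmn ↦ antitoneOn_bertrandTerm hp (Set.mem_Ioi.2 (Nat.one_lt_cast.2 hm))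
    (Set.mem_Ioi.2 (Nat.one_lt_cast.2 hn)) (Nat.cast_le.2 hmn)

theorem two_pow_mul_bertrandTerm_two_pow (p : ℝ) (k : ℕ) :
    2 ^ k * bertrandTerm p (2 ^ k) = (log 2 ^ p)⁻¹ * ((k : ℝ) ^ p)⁻¹ := by
  have hlog : 0 ≤ log 2 := log_nonneg one_le_two
  rw [bertrandTerm, log_pow, mul_rpow k.cast_nonneg hlog, mul_inv, mul_inv,
    mul_inv_cancel_left₀ (by positivity), mul_comm]

theorem summable_bertrandTerm_iff {p : ℝ} (hp : 0 ≤ p) :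
    Summable (fun n : ℕ ↦ bertrandTerm p n) ↔ 1 < p := by
  have hnonneg : ∀ᶠ n : ℕ in atTop, 0 ≤ bertrandTerm p n := by
    filter_upwards [eventually_ge_atTop 1] with n hn
    exact bertrandTerm_nonneg p (mod_cast hn)
  have hanti : ∀ᶠ n : ℕ in atTop, bertrandTerm p (n + 1 : ℕ) ≤ bertrandTerm p n := by
    filter_upwards [eventually_ge_atTop 2] with n hn
    exact antitoneOn_bertrandTerm_natCast hp hn (Nat.le_succ_of_le hn) n.le_succ
  have hlog : (log 2 ^ p)⁻¹ ≠ 0 := (inv_pos.2 (rpow_pos_of_pos (log_pos one_lt_two) p)).ne'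
  rw [← summable_condensed_iff_of_eventually_nonneg hnonneg hanti]
  simp only [Nat.cast_pow, Nat.cast_ofNat, two_pow_mul_bertrandTerm_two_pow]
  rw [summable_mul_left_iff hlog, summable_nat_rpow_inv]

theorem eventually_exp_one_le_natCast : ∀ᶠ n : ℕ in atTop, exp 1 ≤ n :=
  tendsto_natCast_atTop_atTop.eventually_ge_atTop (exp 1)

theorem isLittleO_sq_log_add_log_log_mul {ι : Type*} {l : Filter ι} {u s : ι → ℝ}
    (hu : Tendsto u l atTop) (hs : s =O[l] fun _ ↦ (1 : ℝ)) :
    (fun i ↦ (log (u i) + log (log (u i)) * s i) ^ 2) =o[l] u := by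
  have hloglog : (fun i ↦ log (log (u i))) =O[l] fun i ↦ log (u i) :=
    (isLittleO_log_id_atTop.comp_tendsto (tendsto_log_atTop.comp hu)).isBigO
  have hlog : (fun i ↦ log (u i) + log (log (u i)) * s i) =O[l] fun i ↦ log (u i) :=
    (isBigO_refl _ _).add (by simpa only [mul_one] using hloglog.mul hs)
  exact (hlog.pow 2).trans_isLittleO (isLittleO_pow_log_id_atTop.comp_tendsto hu)

section VariableExponent

variable {s : ℕ → ℝ}

theorem summable_bertrandTerm_of_eventually_le {p : ℝ} (hp : 1 < p)
    (hs : ∀ᶠ n in atTop, p ≤ s n) : Summable fun n : ℕ ↦ bertrandTerm (s n) n := by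
  have hsum := (summable_bertrandTerm_iff (zero_le_one.trans hp.le)).2 hp
  refine hsum.of_norm_bounded_eventually_nat ?_
  filter_upwards [hs, eventually_exp_one_le_natCast] with n hps hn
  rw [norm_of_nonneg (bertrandTerm_nonneg _ ((one_le_exp zero_le_one).trans hn))]
  exact bertrandTerm_le_of_exponent_le hn hps

theorem not_summable_bertrandTerm_of_le_one_on_residueClass {m : ℕ} [NeZero m] (k : ZMod m)
    (hs : ∀ᶠ n : ℕ in atTop, (n : ZMod m) = k → s n ≤ 1) :
    ¬ Summable fun n : ℕ ↦ bertrandTerm (s n) n := by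
  intro hsum
  have hclass : Summable ({n : ℕ | (n : ZMod m) = k}.indicator fun n ↦ bertrandTerm 1 n) := by
    refine hsum.of_norm_bounded_eventually_nat ?_
    filter_upwards [hs, eventually_exp_one_le_natCast] with n hs_le hn
    have hnonneg (q : ℝ) : 0 ≤ bertrandTerm q n :=
      bertrandTerm_nonneg q ((one_le_exp zero_le_one).trans hn)
    rw [Set.indicator_apply]
    split_ifs with hk
    · rw [norm_of_nonneg (hnonneg 1)]
      exact bertrandTerm_le_of_exponent_le hn (hs_le hk)
    · rw [norm_zero]
      exact hnonneg _
  rw [summable_indicator_mod_iff_of_antitoneOn (antitoneOn_bertrandTerm_natCast zero_le_one),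
    summable_bertrandTerm_iff zero_le_one] at hclass
  exact lt_irrefl 1 hclass

theorem isEquivalent_one_sub_log_sub_log_log_mul_pow_bertrandTerm
    (hs : s =O[atTop] fun _ ↦ (1 : ℝ)) :
    (fun n : ℕ ↦ (1 - log n / n - log (log n) / n * s n) ^ n) ~[atTop]
      fun n ↦ bertrandTerm (s n) n := by
  have hequiv := isEquivalent_one_sub_div_pow_exp_neg
    (isLittleO_sq_log_add_log_log_mul tendsto_natCast_atTop_atTop hs)
  refine (hequiv.congr_left ?_).congr_right ?_
  · exact Eventually.of_forall fun n ↦ by ring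
  · filter_upwards [eventually_gt_atTop 1] with n hn
    rw [bertrandTerm_eq_exp _ (mod_cast hn)]

theorem exists_tendsto_sum_iff_summable_bertrandTerm (hs : s =O[atTop] fun _ ↦ (1 : ℝ)) (m : ℕ) :
    (∃ l, Tendsto (fun N ↦ ∑ i ∈ Finset.Icc m N,
        (1 - log i / i - log (log i) / i * s i) ^ i) atTop (𝓝 l)) ↔
      Summable fun n : ℕ ↦ bertrandTerm (s n) n := by
  have hequiv := isEquivalent_one_sub_log_sub_log_log_mul_pow_bertrandTerm hs
  have hnonneg : ∀ᶠ n : ℕ in atTop, 0 ≤ bertrandTerm (s n) n := by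
    filter_upwards [eventually_ge_atTop 1] with n hn
    exact bertrandTerm_nonneg _ (mod_cast hn)
  rw [exists_tendsto_sum_Icc_iff_summable (hequiv.eventually_nonneg hnonneg),
    hequiv.summable_iff_nat]

end VariableExponent

theorem sub_abs_le_add_neg_one_pow_mul (a b : ℝ) (n : ℕ) : a - |b| ≤ a + (-1) ^ n * b := by
  have habs : |(-1) ^ n * b| = |b| := by rw [abs_mul, abs_neg_one_pow, one_mul]
  linarith [neg_abs_le ((-1) ^ n * b)]

theorem exists_residueClass_add_neg_one_pow_mul_eq (a b : ℝ) :
    ∃ k : ZMod 2, ∀ n : ℕ, (n : ZMod 2) = k → a + (-1) ^ n * b = a - |b| := by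
  rcases le_total 0 b with hb | hb
  · refine ⟨1, fun n hn ↦ ?_⟩
    rw [(ZMod.natCast_eq_one_iff_odd.1 hn).neg_one_pow, abs_of_nonneg hb]
    ring
  · refine ⟨0, fun n hn ↦ ?_⟩
    rw [(ZMod.natCast_eq_zero_iff_even.1 hn).neg_one_pow, abs_of_nonpos hb]
    ring

theorem isBigO_one_mul_add_neg_one_pow_mul {c : ℕ → ℝ} (hc : c =O[atTop] fun _ ↦ (1 : ℝ))
    (a b : ℝ) : (fun n ↦ c n * (a + (-1) ^ n * b)) =O[atTop] fun _ ↦ (1 : ℝ) := by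
  have hsign : (fun n : ℕ ↦ (-1 : ℝ) ^ n * b) =O[atTop] fun _ ↦ (1 : ℝ) :=
    .of_bound |b| <| .of_forall fun n ↦ by
      rw [norm_eq_abs, abs_mul, abs_neg_one_pow, one_mul, norm_one, mul_one]
  simpa only [mul_one] using hc.mul ((isBigO_const_const a one_ne_zero _).add hsign)

theorem summable_bertrandTerm_mul_add_neg_one_pow_mul_iff {c : ℕ → ℝ}
    (hc : Tendsto c atTop (𝓝 1)) (hc_le : ∀ᶠ n in atTop, c n ≤ 1) (a b : ℝ) :
    Summable (fun n : ℕ ↦ bertrandTerm (c n * (a + (-1) ^ n * b)) n) ↔ 1 < a - |b| := by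
  have hc_nonneg : ∀ᶠ n in atTop, 0 ≤ c n := hc.eventually_const_le one_pos
  refine ⟨fun hsum ↦ ?_, fun hab ↦ ?_⟩
  · by_contra! hab
    obtain ⟨k, hk⟩ := exists_residueClass_add_neg_one_pow_mul_eq a b
    refine not_summable_bertrandTerm_of_le_one_on_residueClass k ?_ hsum
    filter_upwards [hc_nonneg, hc_le] with n hn_nonneg hn_le hnk
    rw [hk n hnk]
    exact (mul_le_of_le_one_right hn_nonneg hab).trans hn_le
  · obtain ⟨p, hp, hpab⟩ := exists_between hab
    have hlim : Tendsto (fun n ↦ c n * (a - |b|)) atTop (𝓝 (a - |b|)) := by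
      simpa only [one_mul] using hc.mul_const (a - |b|)
    refine summable_bertrandTerm_of_eventually_le hp ?_
    filter_upwards [hlim.eventually_const_le hpab, hc_nonneg] with n hpn hn_nonneg
    exact hpn.trans (mul_le_mul_of_nonneg_left (sub_abs_le_add_neg_one_pow_mul a b n) hn_nonneg)

theorem tendsto_cos_one_div_natCast_sq : Tendsto (fun n : ℕ ↦ cos (1 / n) ^ 2) atTop (𝓝 1) := by
  have hcos : Tendsto (fun n : ℕ ↦ cos (1 / n)) atTop (𝓝 (cos 0)) :=
    (continuous_cos.tendsto 0).comp tendsto_one_div_atTop_nhds_zero_nat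
  simpa only [cos_zero, one_pow] using hcos.pow 2

end

theorem example4_series_convergence_general (a b : ℝ) :
    (∃ l : ℝ, Tendsto (fun N : ℕ => ∑ i ∈ Finset.Icc 3 N,
        (1 - Real.log i / i -
          (Real.log (Real.log i) / i) * (Real.cos (1 / i)) ^ 2 *
            (a + (-1 : ℝ) ^ i * b)) ^ i) atTop (nhds l)) ↔ 1 < a - |b| := by
  have hcos := tendsto_cos_one_div_natCast_sq
  have hbounded := isBigO_one_mul_add_neg_one_pow_mul (hcos.isBigO_one ℝ) a b
  simp only [mul_assoc]
  rw [exists_tendsto_sum_iff_summable_bertrandTerm hbounded,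
    summable_bertrandTerm_mul_add_neg_one_pow_mul_iff hcos
      (.of_forall fun n ↦ Real.cos_sq_le_one (1 / n))]

/-- for `a ≥ 0`, `b ≥ 0`, the series
`S^{a,b} = ∑_{i=3}^∞ (1 - log i / i - (log log i / i) cos²(1/i) (a + (-1)^i b))^i`
converges if `a - b > 1` and diverges if `a + b < 1`. -/
theorem example4_series_convergence (a b : ℝ) (ha : 0 ≤ a) (hb : 0 ≤ b) :
    (1 < a - b → ∃ l : ℝ,
      Tendsto (fun N : ℕ => ∑ i ∈ Finset.Icc 3 N,
        (1 - Real.log i / i -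
          (Real.log (Real.log i) / i) * (Real.cos (1 / i)) ^ 2 *
            (a + (-1 : ℝ) ^ i * b)) ^ i) atTop (nhds l)) ∧
    (a + b < 1 → ¬ ∃ l : ℝ,
      Tendsto (fun N : ℕ => ∑ i ∈ Finset.Icc 3 N,
        (1 - Real.log i / i -
          (Real.log (Real.log i) / i) * (Real.cos (1 / i)) ^ 2 *
            (a + (-1 : ℝ) ^ i * b)) ^ i) atTop (nhds l)) := by
  rw [example4_series_convergence_general, abs_of_nonneg hb]
  exact ⟨id, fun h ↦ not_lt.2 (by linarith)⟩
end
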